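/- arXiv:2605.01797 — 2 statements merged into one kernel-verified Lean document; each statement's English description precedes it below -/
import Mathlib

section
/- Let P be a normal logic program over its finite set of atoms 𝒜_P and let S ⊆ 𝒜_P be a stable model of P. Then there exists a successful DProp computation on P whose final true set T^∞ equals S; in particular, the run that at each decision step falsifies an atom of (𝒜_P ∖ S) ∩ U^{k-1} maintains T^k ⊆ S and T^k ∩ F^k = ∅ at every iteration and terminates with T^∞ = S. -/
/-- A rule of a normal logic program: head atom, positive body atoms, default-negated body atoms. -/
structure Rule (α : Type) where
  head : α
  pos : Finset α
  neg : Finset α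

/-- The immediate consequence operator `C_{P,J}(I)`. -/
def imCons {α : Type} (P : Set (Rule α)) (J I : Set α) : Set α :=
  { a | ∃ r ∈ P, r.head = a ∧ ↑r.pos ⊆ I ∧ ∀ b ∈ r.neg, b ∉ J }

lemma imCons_mono {α : Type} (P : Set (Rule α)) (J : Set α) : Monotone (imCons P J) := by
  rintro I I' h a ⟨r, hr, hh, hp, hn⟩
  exact ⟨r, hr, hh, fun x hx => h (hp hx), hn⟩

/-- `C_{P,J}^∞(I)`: the least fixpoint of `C_{P,J}` above `I`, obtained by iterating from `I`. -/
def imConsInf {α : Type} (P : Set (Rule α)) (J I : Set α) : Set α :=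
  OrderHom.lfp ⟨fun X => I ∪ imCons P J X,
    fun _ _ h => Set.union_subset_union (le_refl I) (imCons_mono P J h)⟩

/-- The Gelfond–Lifschitz reduct `P^S`. -/
def reduct {α : Type} (P : Set (Rule α)) (S : Set α) : Set (Rule α) :=
  { r' | ∃ r ∈ P, (∀ b ∈ r.neg, b ∉ S) ∧ r' = ⟨r.head, r.pos, ∅⟩ }

/-- `M` is a model of the program `P`. -/
def isModel {α : Type} (P : Set (Rule α)) (M : Set α) : Prop :=
  ∀ r ∈ P, ↑r.pos ⊆ M → (∀ b ∈ r.neg, b ∉ M) → r.head ∈ M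

/-- `S` is a stable model of `P`: `S` is the least model of the reduct `P^S`. -/
def isStableModel {α : Type} (P : Set (Rule α)) (S : Set α) : Prop :=
  isModel (reduct P S) S ∧ ∀ M : Set α, isModel (reduct P S) M → S ⊆ M

lemma imConsInf_unfold {α : Type} (P : Set (Rule α)) (J I : Set α) :
    I ∪ imCons P J (imConsInf P J I) = imConsInf P J I :=
  OrderHom.map_lfp (⟨fun X => I ∪ imCons P J X,
    fun _ _ h => Set.union_subset_union (le_refl I) (imCons_mono P J h)⟩ : Set α →o Set α)

lemma imConsInf_le {α : Type} (P : Set (Rule α)) (J I X : Set α)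
    (h1 : I ⊆ X) (h2 : imCons P J X ⊆ X) : imConsInf P J I ⊆ X :=
  OrderHom.lfp_le (⟨fun X => I ∪ imCons P J X,
    fun _ _ h => Set.union_subset_union (le_refl I) (imCons_mono P J h)⟩ : Set α →o Set α)
    (Set.union_subset h1 h2)

def dpT {α : Type} (P : Set (Rule α)) (F : ℕ → Set α) : ℕ → Set α
  | 0 => imConsInf P (Set.univ \ F 0) ∅
  | k + 1 => imConsInf P (Set.univ \ F (k + 1)) (dpT P F k)

lemma dpT_closed {α : Type} (P : Set (Rule α)) (F : ℕ → Set α) (k : ℕ) :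
    imCons P (Set.univ \ F k) (dpT P F k) ⊆ dpT P F k := by
  cases k <;>
  · intro x hx
    rw [dpT, ← imConsInf_unfold]
    exact Or.inr hx

lemma dpT_mono {α : Type} (P : Set (Rule α)) (F : ℕ → Set α) (k : ℕ) :
    dpT P F k ⊆ dpT P F (k + 1) := by
  intro x hx
  rw [dpT, ← imConsInf_unfold]
  exact Or.inl hx

lemma dpT_sub {α : Type} (P : Set (Rule α)) (F : ℕ → Set α) (S : Set α)
    (hS : isModel (reduct P S) S) (hF : ∀ k, ∀ a ∈ F k, a ∉ S) (k : ℕ) :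
    dpT P F k ⊆ S := by
  have key : ∀ k, imCons P (Set.univ \ F k) S ⊆ S := by
    rintro k a ⟨r, hr, rfl, hp, hn⟩
    refine hS ⟨r.head, r.pos, ∅⟩ ⟨r, hr, fun b hb => ?_, rfl⟩ hp (by simp)
    have := hn b hb
    simp at this
    exact hF k b this
  induction k with
  | zero => exact imConsInf_le _ _ _ _ (Set.empty_subset _) (key 0)
  | succ k ih => exact imConsInf_le _ _ _ _ ih (key (k + 1))

/-- Every stable model `S` of `P` is the final true set of a successful
DProp computation: the run that at each decision step falsifies an atom of
`(𝒜 ∖ S) ∩ U^{k-1}` maintains `T^k ⊆ S` and `T^k ∩ F^k = ∅`, and terminates with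
`T^∞ = S`. -/
theorem stable_model_has_successful_dprop_run {α : Type} [Fintype α]
    (P : Set (Rule α)) (S : Set α) (hS : isStableModel P S) :
    ∃ (m : ℕ) (T F U : ℕ → Set α),
      T 0 = imConsInf P Set.univ ∅ ∧
      F 0 = (∅ : Set α) ∧
      U 0 = Set.univ \ (T 0 ∪ F 0) ∧
      (∀ k, 1 ≤ k → k ≤ m → ∃ a ∈ (Set.univ \ S) ∩ U (k - 1), F k = F (k - 1) ∪ {a}) ∧
      (∀ k, 1 ≤ k → k ≤ m → T k = imConsInf P (Set.univ \ F k) (T (k - 1))) ∧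
      (∀ k, 1 ≤ k → k ≤ m → U k = U (k - 1) \ (T k ∪ F k)) ∧
      (∀ k ≤ m, T k ⊆ S ∧ T k ∩ F k = ∅) ∧
      U m = ∅ ∧ T m ∩ F m = ∅ ∧ T m = S := by
  classical
  obtain ⟨n, ⟨e⟩⟩ := Finite.exists_equiv_fin (Sᶜ : Set α)
  set F : ℕ → Set α := fun k => {a | ∃ i : Fin n, (i : ℕ) < k ∧ (e.symm i : α) = a} with hFd
  have hF : ∀ k, ∀ a ∈ F k, a ∉ S := by
    rintro k a ⟨i, _, rfl⟩
    exact (e.symm i).2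
  have hT := dpT_sub P F S hS.1 hF
  have hF0 : F 0 = ∅ := by
    ext a; simp [hFd]
  have hFn : F n = Sᶜ := by
    ext a
    refine ⟨hF n a, fun ha => ⟨e ⟨a, ha⟩, (e ⟨a, ha⟩).2, by simp⟩⟩
  have hTF : ∀ k, dpT P F k ∩ F k = ∅ := by
    intro k
    ext a
    simp only [Set.mem_inter_iff, Set.mem_empty_iff_false, iff_false]
    exact fun h => hF k a h.2 (hT k h.1)
  have hFm : ∀ k, F k ⊆ F (k + 1) := by
    rintro k a ⟨i, hi, rfl⟩
    exact ⟨i, by omega, rfl⟩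
  have hTn : dpT P F n = S := by
    refine (hT n).antisymm (hS.2 _ ?_)
    rintro _ ⟨r, hr, hn, rfl⟩ hp -
    exact dpT_closed P F n ⟨r, hr, rfl, hp, fun b hb => by
      rw [hFn]; simpa using hn b hb⟩
  refine ⟨n, dpT P F, F, fun k => Set.univ \ (dpT P F k ∪ F k), ?_, hF0, rfl, ?_, ?_, ?_,
    fun k _ => ⟨hT k, hTF k⟩, ?_, hTF n, hTn⟩
  · rw [dpT, hF0, Set.diff_empty]
  · rintro (_ | k) h1 h2
    · omega
    · have hk : k < n := by omega
      refine ⟨e.symm ⟨k, hk⟩, ⟨⟨trivial, (e.symm ⟨k, hk⟩).2⟩, trivial, ?_⟩, ?_⟩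
      · rintro (h | ⟨i, hi, h⟩)
        · exact (e.symm ⟨k, hk⟩).2 (hT _ h)
        · have := e.symm.injective (Subtype.ext h)
          subst this
          simp at hi
      · ext a
        constructor
        · rintro ⟨i, hi, rfl⟩
          rcases Nat.lt_succ_iff_lt_or_eq.mp hi with h | h
          · exact Or.inl ⟨i, h, rfl⟩
          · right
            have : i = ⟨k, hk⟩ := Fin.ext h
            rw [this]; rfl
        · rintro (h | h)
          · exact hFm k h
          · exact ⟨⟨k, hk⟩, Nat.lt_succ_self k, h.symm⟩
  · rintro (_ | k) h1 h2
    · omega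
    · rfl
  · rintro (_ | k) h1 h2
    · omega
    · ext a
      have h1 := @dpT_mono _ P F k a
      have h2 := @hFm k a
      simp only [Nat.add_sub_cancel, Set.mem_diff, Set.mem_union, Set.mem_univ, true_and]
      tauto
  · simp only [hTn, hFn, Set.union_compl_self, Set.diff_self]
end

section
/- Let P be a normal logic program over its finite set of atoms 𝒜_P, and let S be the final true set T^∞ of a successful DProp computation on P. Then S is a stable model of P. -/
/-- The final true set of a successful DProp computation is a stable
model of `P`. -/
theorem successful_dprop_run_yields_stable_model {α : Type} [Fintype α]
    (P : Set (Rule α)) (m : ℕ) (T F U : ℕ → Set α)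
    (hT0 : T 0 = imConsInf P Set.univ ∅)
    (hF0 : F 0 = (∅ : Set α))
    (hU0 : U 0 = Set.univ \ (T 0 ∪ F 0))
    (hdec : ∀ k, 1 ≤ k → k ≤ m → ∃ a ∈ U (k - 1), F k = F (k - 1) ∪ {a})
    (hprop : ∀ k, 1 ≤ k → k ≤ m → T k = imConsInf P (Set.univ \ F k) (T (k - 1)))
    (hupd : ∀ k, 1 ≤ k → k ≤ m → U k = U (k - 1) \ (T k ∪ F k))
    (hdone : U m = ∅)
    (hfree : T m ∩ F m = ∅) :
    isStableModel P (T m) := by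
  have step : ∀ k, k + 1 ≤ m → T (k+1) = imConsInf P (Set.univ \ F (k+1)) (T k) :=
    fun k hk => hprop (k+1) (by omega) hk
  have hFm : ∀ j, ∀ k, k + j = m → F k ⊆ F m := by
    intro j
    induction j with
    | zero => intro k hk; obtain rfl : k = m := by omega
              exact subset_rfl
    | succ j ih =>
      intro k hk
      obtain ⟨a, _, ha⟩ := hdec (k+1) (by omega) (by omega)
      refine subset_trans ?_ (ih (k+1) (by omega))
      rw [ha]; exact Set.subset_union_left
  have hF : ∀ k, k ≤ m → F k ⊆ F m := fun k hk => hFm (m - k) k (by omega)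
  have fix : ∀ J I : Set α, I ∪ imCons P J (imConsInf P J I) = imConsInf P J I :=
    fun J I => OrderHom.map_lfp (⟨fun X => I ∪ imCons P J X,
      fun _ _ h => Set.union_subset_union (le_refl I) (imCons_mono P J h)⟩ : Set α →o Set α)
  have least : ∀ J I M : Set α, I ⊆ M → imCons P J M ⊆ M → imConsInf P J I ⊆ M :=
    fun J I M h1 h2 => OrderHom.lfp_le _ (Set.union_subset h1 h2)
  have hcov : ∀ k, k ≤ m → ∀ x, x ∈ T k ∨ x ∈ F k ∨ x ∈ U k := by
    intro k
    induction k with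
    | zero => intro _ x; rw [hU0]; simp; tauto
    | succ k ih =>
      intro hk x
      have hu := hupd (k+1) (by omega) hk
      obtain ⟨a, _, ha⟩ := hdec (k+1) (by omega) hk
      have h1 : T k ⊆ T (k+1) := by
        rw [step k hk, ← fix]; exact Set.subset_union_left
      have h2 : F k ⊆ F (k+1) := by
        rw [ha]; exact Set.subset_union_left
      rw [hu]
      simp only [Nat.add_sub_cancel, Set.mem_diff, Set.mem_union]
      have := ih (by omega) x
      have := @h1 x
      have := @h2 x
      tauto
  have hcm : ∀ x, x ∉ T m → x ∈ F m := by
    intro x hx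
    have := hcov m le_rfl x
    rw [hdone] at this
    simpa [hx] using this
  have hdis : ∀ x, x ∈ F m → x ∉ T m := fun x h1 h2 => by
    have : x ∈ T m ∩ F m := ⟨h2, h1⟩
    rw [hfree] at this
    exact this
  have hform : ∃ I, T m = imConsInf P (Set.univ \ F m) I := by
    cases m with
    | zero => exact ⟨∅, by rw [hT0, hF0, Set.diff_empty]⟩
    | succ n => exact ⟨T n, step n le_rfl⟩
  constructor
  · rintro _ ⟨r, hr, hn, rfl⟩ hp _
    obtain ⟨I, hI⟩ := hform
    have h := fix (Set.univ \ F m) I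
    rw [← hI] at h
    rw [← h]
    exact Or.inr ⟨r, hr, rfl, hp, fun b hb hb2 => hb2.2 (hcm b (hn b hb))⟩
  · intro M hM
    have closed : ∀ J : Set α, (∀ x, x ∉ J → x ∈ F m) → imCons P J M ⊆ M := by
      rintro J hJ a ⟨r, hr, rfl, hp, hn⟩
      exact hM ⟨r.head, r.pos, ∅⟩ ⟨r, hr, fun b hb => hdis b (hJ b (hn b hb)), rfl⟩ hp (by simp)
    have key : ∀ k, k ≤ m → T k ⊆ M := by
      intro k
      induction k with
      | zero =>
        intro _
        rw [hT0]
        exact least _ _ _ (Set.empty_subset _) (closed _ (fun x hx => absurd (Set.mem_univ x) hx))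
      | succ k ih =>
        intro hk
        rw [step k hk]
        refine least _ _ _ (ih (by omega)) (closed _ (fun x hx => hF (k+1) hk ?_))
        by_contra h
        exact hx ⟨Set.mem_univ x, h⟩
    exact key m le_rfl
end
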